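/- arXiv:1411.5308 — 6 statements merged into one kernel-verified Lean document; each statement's English description precedes it below -/
import Mathlib

section
/- Let Γ be a finite group, x ≥ 1, y ≥ 0, and (f,c) : x → 1+y a morphism of OI_Γ. Set z = x−1 if f(1) = 1 and z = x otherwise. Then there exist morphisms (f₁,c₁) : x → 1+z and (f₂,c₂) : z → y of OI_Γ with (f,c) = (𝕀⊙(f₂,c₂)) ∘ (f₁,c₁). Moreover: if f(1) ≠ 1 there is no such factorization with z replaced by x−1; in any such factorization (for the given z) the increasing injections f₁ and f₂ are uniquely determined by f (f₁ is the identity of [x] if f(1)=1, and is the map r ↦ 1+r otherwise); for a fixed (f₁,c₁) the morphism (f₂,c₂) is unique; and for any two such factorizations ((f₁,c₁),(f₂,c₂)) and ((f₁,c₁′),(f₂,c₂′)) there exists a morphism (id,d) : z → z of OI_Γ with (f₁,c₁′) = (𝕀⊙(id,d)) ∘ (f₁,c₁) and (f₂,c₂) = (f₂,c₂′) ∘ (id,d). -/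
/-- Morphisms of `OI_Γ` from `[x]` to `[y]`: pairs `(f, c)` with `f : [x] → [y]` a strictly
increasing (hence injective) map and `c : [x] → Γ` an arbitrary map.  We model
`[n] = {1,…,n}` by `Fin n`, so the element `1 ∈ [1+y]` corresponds to `0 : Fin (y+1)`. -/
structure OIGHom (Γ : Type) (x y : ℕ) where
  f : Fin x → Fin y
  mono : StrictMono f
  c : Fin x → Γ

/-- Composition in `OI_Γ`: `(f₂,c₂) ∘ (f₁,c₁) = (f₂∘f₁, r ↦ c₂(f₁ r) · c₁ r)`. -/
def OIGcomp {Γ : Type} [Group Γ] {x y z : ℕ} (β : OIGHom Γ y z) (α : OIGHom Γ x y) :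
    OIGHom Γ x z :=
  ⟨β.f ∘ α.f, β.mono.comp α.mono, fun r => β.c (α.f r) * α.c r⟩

theorem shiftMono {x y : ℕ} {f : Fin x → Fin y} (hf : StrictMono f) :
    StrictMono (Fin.cases 0 (fun r => (f r).succ) : Fin (x + 1) → Fin (y + 1)) := by
  intro a b hab
  induction a using Fin.cases with
  | zero =>
    induction b using Fin.cases with
    | zero => exact absurd hab (lt_irrefl _)
    | succ b => simp only [Fin.cases_zero, Fin.cases_succ]; exact Fin.succ_pos _
  | succ a =>
    induction b using Fin.cases with
    | zero => exact absurd hab (Fin.not_lt.mpr (Fin.zero_le _))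
    | succ b =>
      simp only [Fin.cases_succ]
      exact Fin.succ_lt_succ_iff.mpr (hf (Fin.succ_lt_succ_iff.mp hab))

/-- The shift `𝕀 ⊙ (f,c)` of a morphism of `OI_Γ`: `(f⁺, c⁺)` where `f⁺(1) = 1`,
`f⁺(1+r) = 1+f(r)`, `c⁺(1) = 1` and `c⁺(1+r) = c(r)`. -/
def OIGshift {Γ : Type} [Group Γ] {x y : ℕ} (α : OIGHom Γ x y) : OIGHom Γ (x + 1) (y + 1) :=
  ⟨Fin.cases 0 (fun r => (α.f r).succ), shiftMono α.mono, Fin.cons 1 α.c⟩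

theorem OIG_ext {Γ : Type} {x y : ℕ} {α β : OIGHom Γ x y} (h : α.f = β.f) (h' : α.c = β.c) :
    α = β := by
  cases α; cases β; cases h; cases h'; rfl

theorem OIG_id {n : ℕ} {g : Fin n → Fin n} (hg : StrictMono g) : g = id :=
  (hg.range_inj strictMono_id).mp
    (by rw [(Finite.surjective_of_injective hg.injective).range_eq, Set.range_id])

theorem OIG_succ {n : ℕ} {g : Fin n → Fin (n + 1)} (hg : StrictMono g) (h0 : ∀ r, g r ≠ 0) :
    g = Fin.succ := by
  have h : (fun r => (g r).pred (h0 r)) = id := by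
    apply OIG_id
    intro a b hab
    exact Fin.pred_lt_pred_iff.mpr (hg hab)
  funext r
  have := congrFun h r
  simp only [id] at this
  rw [← Fin.succ_pred (g r) (h0 r), this]

theorem OIG_shift_f_zero {Γ : Type} [Group Γ] {x y : ℕ} (α : OIGHom Γ x y) :
    (OIGshift α).f 0 = 0 := rfl
theorem OIG_shift_f_succ {Γ : Type} [Group Γ] {x y : ℕ} (α : OIGHom Γ x y) (r : Fin x) :
    (OIGshift α).f r.succ = (α.f r).succ := rfl
theorem OIG_shift_c_zero {Γ : Type} [Group Γ] {x y : ℕ} (α : OIGHom Γ x y) :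
    (OIGshift α).c 0 = 1 := rfl
theorem OIG_shift_c_succ {Γ : Type} [Group Γ] {x y : ℕ} (α : OIGHom Γ x y) (r : Fin x) :
    (OIGshift α).c r.succ = α.c r := rfl

theorem OIG_eqs {Γ : Type} [Group Γ] {x y z : ℕ} {α : OIGHom Γ x z} {β : OIGHom Γ y z}
    {γ : OIGHom Γ x y} (h : α = OIGcomp β γ) (r : Fin x) :
    α.f r = β.f (γ.f r) ∧ α.c r = β.c (γ.f r) * γ.c r := by
  subst h; exact ⟨rfl, rfl⟩

theorem OIG_rel {Γ : Type} {x y : ℕ} [Group Γ] {α : OIGHom Γ (x + 1) (y + 1)}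
    {α₁ α₁' : OIGHom Γ (x + 1) (x + 1)} {α₂ α₂' : OIGHom Γ x y}
    (h : α = OIGcomp (OIGshift α₂) α₁) (h' : α = OIGcomp (OIGshift α₂') α₁') :
    α₂.f = α₂'.f ∧ α₁.c 0 = α₁'.c 0 ∧
      ∀ r : Fin x, α₂.c r * α₁.c r.succ = α₂'.c r * α₁'.c r.succ := by
  have e := OIG_id α₁.mono
  have e' := OIG_id α₁'.mono
  refine ⟨?_, ?_, ?_⟩
  · funext r
    have a := (OIG_eqs h r.succ).1
    have b := (OIG_eqs h' r.succ).1
    rw [e, id, OIG_shift_f_succ] at a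
    rw [e', id, OIG_shift_f_succ] at b
    exact Fin.succ_injective _ (a.symm.trans b)
  · have a := (OIG_eqs h 0).2
    have b := (OIG_eqs h' 0).2
    rw [e, id, OIG_shift_c_zero, one_mul] at a
    rw [e', id, OIG_shift_c_zero, one_mul] at b
    exact a.symm.trans b
  · intro r
    have a := (OIG_eqs h r.succ).2
    have b := (OIG_eqs h' r.succ).2
    rw [e, id, OIG_shift_c_succ] at a
    rw [e', id, OIG_shift_c_succ] at b
    exact a.symm.trans b

theorem OIG_fsucc {Γ : Type} {x y : ℕ} [Group Γ] {α : OIGHom Γ (x + 1) (y + 1)}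
    (h0 : α.f 0 ≠ 0)
    {α₁ : OIGHom Γ (x + 1) (x + 1 + 1)} {α₂ : OIGHom Γ (x + 1) y}
    (h : α = OIGcomp (OIGshift α₂) α₁) : α₁.f = Fin.succ := by
  apply OIG_succ α₁.mono
  intro r hr
  have hz : α₁.f 0 = 0 := by
    have := α₁.mono.monotone (Fin.zero_le r)
    rw [hr] at this
    exact Fin.le_zero_iff.mp this
  have a := (OIG_eqs h 0).1
  rw [hz] at a
  exact h0 a

theorem OIG_rel' {Γ : Type} {x y : ℕ} [Group Γ] {α : OIGHom Γ (x + 1) (y + 1)}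
    (h0 : α.f 0 ≠ 0)
    {α₁ α₁' : OIGHom Γ (x + 1) (x + 1 + 1)} {α₂ α₂' : OIGHom Γ (x + 1) y}
    (h : α = OIGcomp (OIGshift α₂) α₁) (h' : α = OIGcomp (OIGshift α₂') α₁') :
    α₂.f = α₂'.f ∧ 
      ∀ r, α₂.c r * α₁.c r = α₂'.c r * α₁'.c r := by
  have e := OIG_fsucc h0 h
  have e' := OIG_fsucc h0 h'
  refine ⟨?_, ?_⟩
  · funext r
    have a := (OIG_eqs h r).1
    have b := (OIG_eqs h' r).1
    rw [e, OIG_shift_f_succ] at a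
    rw [e', OIG_shift_f_succ] at b
    exact Fin.succ_injective _ (a.symm.trans b)
  · intro r
    have a := (OIG_eqs h r).2
    have b := (OIG_eqs h' r).2
    rw [e, OIG_shift_c_succ] at a
    rw [e', OIG_shift_c_succ] at b
    exact a.symm.trans b

/-- Let `Γ` be a finite group, `x ≥ 1` (the paper's `x` is our `x+1`),
`y ≥ 0`, and `(f,c) : x → 1+y` a morphism of `OI_Γ`.  Set `z = x−1` if `f(1) = 1` and `z = x`
otherwise.  Then a factorization `(f,c) = (𝕀⊙(f₂,c₂)) ∘ (f₁,c₁)` through `z` exists; if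
`f(1) ≠ 1` there is no such factorization through `x−1`; in any such factorization the
increasing injections `f₁`, `f₂` are uniquely determined by `f` (`f₁ = id` if `f(1)=1` and
`f₁ = (r ↦ 1+r)` otherwise); for a fixed `(f₁,c₁)` the morphism `(f₂,c₂)` is unique; and any
two such factorizations are related by a morphism `(id,d) : z → z` of `OI_Γ`. -/
theorem stmt3 {Γ : Type} [Group Γ] [Finite Γ] (x y : ℕ) (α : OIGHom Γ (x + 1) (y + 1)) :
    (α.f 0 = 0 →
      (∃ (α₁ : OIGHom Γ (x + 1) (x + 1)) (α₂ : OIGHom Γ x y),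
        α = OIGcomp (OIGshift α₂) α₁) ∧
      (∀ (α₁ : OIGHom Γ (x + 1) (x + 1)) (α₂ : OIGHom Γ x y),
        α = OIGcomp (OIGshift α₂) α₁ → α₁.f = id) ∧
      (∀ (α₁ α₁' : OIGHom Γ (x + 1) (x + 1)) (α₂ α₂' : OIGHom Γ x y),
        α = OIGcomp (OIGshift α₂) α₁ → α = OIGcomp (OIGshift α₂') α₁' →
          α₂.f = α₂'.f) ∧
      (∀ (α₁ : OIGHom Γ (x + 1) (x + 1)) (α₂ α₂' : OIGHom Γ x y),
        α = OIGcomp (OIGshift α₂) α₁ → α = OIGcomp (OIGshift α₂') α₁ → α₂ = α₂') ∧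
      (∀ (α₁ α₁' : OIGHom Γ (x + 1) (x + 1)) (α₂ α₂' : OIGHom Γ x y),
        α = OIGcomp (OIGshift α₂) α₁ → α = OIGcomp (OIGshift α₂') α₁' →
          ∃ d : Fin x → Γ,
            α₁' = OIGcomp (OIGshift ⟨id, strictMono_id, d⟩) α₁ ∧
            α₂ = OIGcomp α₂' ⟨id, strictMono_id, d⟩)) ∧
    (α.f 0 ≠ 0 →
      (∃ (α₁ : OIGHom Γ (x + 1) (x + 1 + 1)) (α₂ : OIGHom Γ (x + 1) y),
        α = OIGcomp (OIGshift α₂) α₁) ∧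
      (¬ ∃ (α₁ : OIGHom Γ (x + 1) (x + 1)) (α₂ : OIGHom Γ x y),
        α = OIGcomp (OIGshift α₂) α₁) ∧
      (∀ (α₁ : OIGHom Γ (x + 1) (x + 1 + 1)) (α₂ : OIGHom Γ (x + 1) y),
        α = OIGcomp (OIGshift α₂) α₁ → α₁.f = Fin.succ) ∧
      (∀ (α₁ α₁' : OIGHom Γ (x + 1) (x + 1 + 1)) (α₂ α₂' : OIGHom Γ (x + 1) y),
        α = OIGcomp (OIGshift α₂) α₁ → α = OIGcomp (OIGshift α₂') α₁' →
          α₂.f = α₂'.f) ∧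
      (∀ (α₁ : OIGHom Γ (x + 1) (x + 1 + 1)) (α₂ α₂' : OIGHom Γ (x + 1) y),
        α = OIGcomp (OIGshift α₂) α₁ → α = OIGcomp (OIGshift α₂') α₁ → α₂ = α₂') ∧
      (∀ (α₁ α₁' : OIGHom Γ (x + 1) (x + 1 + 1)) (α₂ α₂' : OIGHom Γ (x + 1) y),
        α = OIGcomp (OIGshift α₂) α₁ → α = OIGcomp (OIGshift α₂') α₁' →
          ∃ d : Fin (x + 1) → Γ,
            α₁' = OIGcomp (OIGshift ⟨id, strictMono_id, d⟩) α₁ ∧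
            α₂ = OIGcomp α₂' ⟨id, strictMono_id, d⟩)) := by
  refine ⟨fun h0 => ⟨?_, ?_, ?_, ?_, ?_⟩, fun h0 => ⟨?_, ?_, ?_, ?_, ?_, ?_⟩⟩
  · have hne : ∀ r : Fin x, α.f r.succ ≠ 0 := fun r hr =>
      absurd (α.mono.injective (hr.trans h0.symm)) (Fin.succ_ne_zero r)
    refine ⟨⟨id, strictMono_id, α.c⟩, ⟨fun r => (α.f r.succ).pred (hne r), ?_, fun _ => 1⟩, ?_⟩
    · intro a b hab
      exact Fin.pred_lt_pred_iff.mpr (α.mono (Fin.succ_lt_succ_iff.mpr hab))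
    · apply OIG_ext
      · funext r
        induction r using Fin.cases with
        | zero => exact h0
        | succ r => exact (Fin.succ_pred _ (hne r)).symm
      · funext r
        induction r using Fin.cases with
        | zero => exact (one_mul _).symm
        | succ r => exact (one_mul _).symm
  · intro α₁ α₂ _
    exact OIG_id α₁.mono
  · intro α₁ α₁' α₂ α₂' h h'
    exact (OIG_rel h h').1
  · intro α₁ α₂ α₂' h h'
    have k := OIG_rel h h'
    exact OIG_ext k.1 (funext fun r => mul_right_cancel (k.2.2 r))
  · intro α₁ α₁' α₂ α₂' h h'
    have k := OIG_rel h h'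
    have e := OIG_id α₁.mono
    have e' := OIG_id α₁'.mono
    refine ⟨fun r => α₁'.c r.succ * (α₁.c r.succ)⁻¹, OIG_ext ?_ ?_, OIG_ext k.1 ?_⟩
    · rw [e']
      exact (OIG_id (OIGcomp _ α₁).mono).symm
    · funext r
      simp only [OIGcomp, e, id]
      induction r using Fin.cases with
      | zero => rw [OIG_shift_c_zero, one_mul, k.2.1]
      | succ r => rw [OIG_shift_c_succ]; simp
    · funext r
      simp only [OIGcomp, id]
      rw [← mul_assoc, ← k.2.2 r, mul_inv_cancel_right]
  · have hne : ∀ r, α.f r ≠ 0 := fun r hr => by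
      have := α.mono.monotone (Fin.zero_le r)
      rw [hr] at this
      exact h0 (Fin.le_zero_iff.mp this)
    refine ⟨⟨Fin.succ, Fin.strictMono_succ, α.c⟩, ⟨fun r => (α.f r).pred (hne r), ?_, fun _ => 1⟩,
      ?_⟩
    · intro a b hab
      exact Fin.pred_lt_pred_iff.mpr (α.mono hab)
    · apply OIG_ext
      · funext r
        exact (Fin.succ_pred _ (hne r)).symm
      · funext r
        exact (one_mul _).symm
  · rintro ⟨α₁, α₂, h⟩
    have a := (OIG_eqs h 0).1
    rw [OIG_id α₁.mono] at a
    exact h0 a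
  · intro α₁ α₂ h
    exact OIG_fsucc h0 h
  · intro α₁ α₁' α₂ α₂' h h'
    exact (OIG_rel' h0 h h').1
  · intro α₁ α₂ α₂' h h'
    have k := OIG_rel' h0 h h'
    exact OIG_ext k.1 (funext fun r => mul_right_cancel (k.2 r))
  · intro α₁ α₁' α₂ α₂' h h'
    have k := OIG_rel' h0 h h'
    have e := OIG_fsucc h0 h
    have e' := OIG_fsucc h0 h'
    refine ⟨fun r => α₁'.c r * (α₁.c r)⁻¹, OIG_ext ?_ ?_, OIG_ext k.1 ?_⟩
    · funext r
      simp only [OIGcomp, Function.comp, e, e']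
      rfl
    · funext r
      simp only [OIGcomp, e]
      rw [OIG_shift_c_succ]; simp
    · funext r
      simp only [OIGcomp, id]
      rw [← mul_assoc, ← k.2 r, mul_inv_cancel_right]
end

section
/- Let Γ be a finite group and x ≥ 1. Then there exists a family of bijections Θ_y : OI_Γ(x,y) ⊔ (Γ × OI_Γ(x−1,y)) → OI_Γ(x,1+y), one for each integer y ≥ 0, such that for every morphism (g,e) : y → y′ of OI_Γ one has Θ_{y′}((g,e)∘α) = (𝕀⊙(g,e)) ∘ Θ_y(α) for every α ∈ OI_Γ(x,y), and Θ_{y′}(γ, (g,e)∘β) = (𝕀⊙(g,e)) ∘ Θ_y(γ, β) for every γ ∈ Γ and β ∈ OI_Γ(x−1,y). -/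
theorem OIGHom_eq {Γ : Type} {x y : ℕ} {a b : OIGHom Γ x y}
    (h : ∀ r, a.f r = b.f r) (hc : ∀ r, a.c r = b.c r) : a = b := by
  cases a; cases b
  obtain rfl := funext h
  obtain rfl := funext hc
  rfl

/-- The underlying map of `Θ`. -/
def thetaFun (Γ : Type) (x y : ℕ) :
    (OIGHom Γ (x + 1) y ⊕ (Γ × OIGHom Γ x y)) → OIGHom Γ (x + 1) (y + 1)
  | Sum.inl α => ⟨fun r => (α.f r).succ, fun _ _ h => Fin.succ_lt_succ_iff.mpr (α.mono h), α.c⟩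
  | Sum.inr (γ, β) => ⟨Fin.cases 0 (fun r => (β.f r).succ), shiftMono β.mono, Fin.cons γ β.c⟩

theorem thetaFun_injective (Γ : Type) (x y : ℕ) : Function.Injective (thetaFun Γ x y) := by
  rintro (a | ⟨γ, a⟩) (b | ⟨δ, b⟩) h
  · replace h := And.intro (congrArg OIGHom.f h) (congrArg OIGHom.c h)
    congr 1
    refine OIGHom_eq (fun r => ?_) (fun r => congrFun h.2 r)
    exact Fin.succ_injective _ (congrFun h.1 r)
  · replace h := And.intro (congrArg OIGHom.f h) (congrArg OIGHom.c h)
    exact absurd (congrFun h.1 0) (Fin.succ_ne_zero _)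
  · replace h := And.intro (congrArg OIGHom.f h) (congrArg OIGHom.c h)
    exact absurd (congrFun h.1 0).symm (Fin.succ_ne_zero _)
  · replace h := And.intro (congrArg OIGHom.f h) (congrArg OIGHom.c h)
    have h0 : γ = δ := congrFun h.2 0
    have h1 : a = b := by
      refine OIGHom_eq (fun r => ?_) (fun r => congrFun h.2 r.succ)
      exact Fin.succ_injective _ (congrFun h.1 r.succ)
    rw [h0, h1]

theorem thetaFun_surjective (Γ : Type) (x y : ℕ) : Function.Surjective (thetaFun Γ x y) := by
  intro a
  by_cases h0 : a.f 0 = 0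
  · have hne : ∀ r : Fin x, a.f r.succ ≠ 0 := fun r h =>
      absurd (a.mono (Fin.succ_pos r)) (by rw [h0, h]; exact lt_irrefl _)
    refine ⟨Sum.inr (a.c 0, ⟨fun r => (a.f r.succ).pred (hne r), fun r s hrs => ?_,
      fun r => a.c r.succ⟩), ?_⟩
    · exact Fin.pred_lt_pred_iff.mpr (a.mono (Fin.succ_lt_succ_iff.mpr hrs))
    · refine OIGHom_eq (fun r => ?_) (fun r => ?_) <;>
        induction r using Fin.cases <;> simp [thetaFun, h0]
  · have hne : ∀ r, a.f r ≠ 0 := fun r h => h0 (by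
      have := a.mono.monotone (Fin.zero_le r)
      rw [h] at this
      exact Fin.le_zero_iff.mp this)
    refine ⟨Sum.inl ⟨fun r => (a.f r).pred (hne r), fun r s hrs => ?_, a.c⟩, ?_⟩
    · exact Fin.pred_lt_pred_iff.mpr (a.mono hrs)
    · refine OIGHom_eq (fun r => ?_) (fun r => ?_) <;> simp [thetaFun]

/-- Let `Γ` be a finite group and `x ≥ 1` (the paper's `x` is our `x+1`).
There is a family of bijections `Θ_y : OI_Γ(x,y) ⊔ (Γ × OI_Γ(x−1,y)) → OI_Γ(x,1+y)`, `y ∈ ℕ`,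
natural with respect to postcomposition: for every `(g,e) : y → y′` of `OI_Γ`,
`Θ_{y′}((g,e)∘α) = (𝕀⊙(g,e)) ∘ Θ_y(α)` and `Θ_{y′}(γ, (g,e)∘β) = (𝕀⊙(g,e)) ∘ Θ_y(γ, β)`. -/
theorem stmt4 (Γ : Type) [Group Γ] [Finite Γ] (x : ℕ) :
    ∃ Θ : ∀ y : ℕ, (OIGHom Γ (x + 1) y ⊕ (Γ × OIGHom Γ x y)) ≃ OIGHom Γ (x + 1) (y + 1),
      ∀ (y y' : ℕ) (g : OIGHom Γ y y'),
        (∀ α : OIGHom Γ (x + 1) y,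
          Θ y' (Sum.inl (OIGcomp g α)) = OIGcomp (OIGshift g) (Θ y (Sum.inl α))) ∧
        (∀ (γ : Γ) (β : OIGHom Γ x y),
          Θ y' (Sum.inr (γ, OIGcomp g β)) = OIGcomp (OIGshift g) (Θ y (Sum.inr (γ, β)))) := by
  refine ⟨fun y => Equiv.ofBijective (thetaFun Γ x y)
    ⟨thetaFun_injective Γ x y, thetaFun_surjective Γ x y⟩, fun y y' g => ⟨fun α => ?_, fun γ β => ?_⟩⟩
  · change thetaFun Γ x y' (Sum.inl (OIGcomp g α)) =
      OIGcomp (OIGshift g) (thetaFun Γ x y (Sum.inl α))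
    refine OIGHom_eq (fun r => ?_) (fun r => ?_) <;>
      simp [thetaFun, OIGcomp, OIGshift]
  · change thetaFun Γ x y' (Sum.inr (γ, OIGcomp g β)) =
      OIGcomp (OIGshift g) (thetaFun Γ x y (Sum.inr (γ, β)))
    refine OIGHom_eq (fun r => ?_) (fun r => ?_) <;>
      induction r using Fin.cases <;> simp [thetaFun, OIGcomp, OIGshift]
end

section
/- Let d ≥ 1 and x ≥ 1. Then there exists a family of bijections Θ_y : ([d] × OI_d(x,y)) ⊔ OI_d(x−1,y) → OI_d(x,1+y), one for each integer y ≥ 0, such that for every morphism (g,ε) : y → y′ of OI_d one has Θ_{y′}(i, (g,ε)∘α) = (𝕀⊙(g,ε)) ∘ Θ_y(i, α) for every i ∈ [d], α ∈ OI_d(x,y), and Θ_{y′}((g,ε)∘β) = (𝕀⊙(g,ε)) ∘ Θ_y(β) for every β ∈ OI_d(x−1,y). -/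
/-- Morphisms of `OI_d` from `[x]` to `[y]`: pairs `(f, δ)` with `f : [x] → [y]` strictly
increasing (hence injective) and `δ : [y]∖f([x]) → [d]` an arbitrary map.  We model
`[n] = {1,…,n}` by `Fin n`, so the element `1 ∈ [1+y]` corresponds to `0 : Fin (y+1)`. -/
structure OIdHom (d x y : ℕ) where
  f : Fin x → Fin y
  mono : StrictMono f
  δ : ∀ m : Fin y, m ∉ Set.range f → Fin d

/-- Composition in `OI_d`: `(f₂,δ₂) ∘ (f₁,δ₁) = (f₂∘f₁, δ₃)` where `δ₃(m) = δ₁(r)` if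
`m = f₂(r)` with `r ∉ im f₁`, and `δ₃(m) = δ₂(m)` if `m ∉ im f₂`. -/
noncomputable def OIdcomp {d x y z : ℕ} (β : OIdHom d y z) (α : OIdHom d x y) :
    OIdHom d x z where
  f := β.f ∘ α.f
  mono := β.mono.comp α.mono
  δ := fun m hm =>
    if h : ∃ r, β.f r = m then
      α.δ h.choose (fun hr => by
        obtain ⟨s, hs⟩ := hr
        exact hm ⟨s, by rw [Function.comp_apply, hs, h.choose_spec]⟩)
    else
      β.δ m (fun hr => h hr)

/-- The shift `𝕀 ⊙ (f,δ)` of a morphism of `OI_d`: `(f⁺, δ⁺)` where `f⁺(1) = 1`,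
`f⁺(1+r) = 1+f(r)` and `δ⁺(1+s) = δ(s)`. -/
noncomputable def OIdshift {d x y : ℕ} (α : OIdHom d x y) : OIdHom d (x + 1) (y + 1) where
  f := Fin.cases 0 (fun r => (α.f r).succ)
  mono := shiftMono α.mono
  δ := fun m hm =>
    have h0 : m ≠ 0 := by
      rintro rfl
      exact hm ⟨0, by simp⟩
    α.δ (m.pred h0) (by
      rintro ⟨s, hs⟩
      exact hm ⟨s.succ, by simp [hs, Fin.succ_pred]⟩)

theorem OIdHom.ext' {d x y : ℕ} {a b : OIdHom d x y} (hf : ∀ r, a.f r = b.f r)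
    (hδ : ∀ m h h', a.δ m h = b.δ m h') : a = b := by
  obtain ⟨f, hm, δ⟩ := a
  obtain ⟨f', hm', δ'⟩ := b
  obtain rfl : f = f' := funext hf
  congr 1
  funext m h
  exact hδ m h h

theorem OIdHom.δ_congr {d x y : ℕ} {a b : OIdHom d x y} (hab : a = b) {m m' : Fin y}
    (hm : m = m') (h : m ∉ Set.range a.f) (h' : m' ∉ Set.range b.f) :
    a.δ m h = b.δ m' h' := by
  subst hab; subst hm; rfl

theorem OIdcomp_δ_in {d x y z : ℕ} (β : OIdHom d y z) (α : OIdHom d x y) (r : Fin y)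
    (hm : β.f r ∉ Set.range (OIdcomp β α).f) (hr : r ∉ Set.range α.f) :
    (OIdcomp β α).δ (β.f r) hm = α.δ r hr := by
  have h : ∃ s, β.f s = β.f r := ⟨r, rfl⟩
  simp only [OIdcomp]
  rw [dif_pos h]
  exact OIdHom.δ_congr rfl (β.mono.injective h.choose_spec) _ _

theorem OIdcomp_δ_out {d x y z : ℕ} (β : OIdHom d y z) (α : OIdHom d x y) (m : Fin z)
    (hm : m ∉ Set.range (OIdcomp β α).f) (hr : m ∉ Set.range β.f) :
    (OIdcomp β α).δ m hm = β.δ m hr := by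
  have h : ¬ ∃ r, β.f r = m := hr
  simp only [OIdcomp]
  rw [dif_neg h]

/-- Put a new point `0` in front, outside of the image, with colour `i`. -/
def OIdup {d x y : ℕ} (i : Fin d) (α : OIdHom d x y) : OIdHom d x (y + 1) where
  f := fun r => (α.f r).succ
  mono := fun _ _ h => Fin.succ_lt_succ_iff.mpr (α.mono h)
  δ := fun m => Fin.cases (motive := fun m => m ∉ Set.range (fun r => (α.f r).succ) → Fin d)
    (fun _ => i) (fun m hm => α.δ m (fun ⟨s, hs⟩ => hm ⟨s, by simp [hs]⟩)) m

theorem OIdup_zero {d x y : ℕ} (i : Fin d) (α : OIdHom d x y) (h) : (OIdup i α).δ 0 h = i := rfl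

theorem OIdup_succ {d x y : ℕ} (i : Fin d) (α : OIdHom d x y) (m : Fin y) (h) (h') :
    (OIdup i α).δ m.succ h = α.δ m h' := rfl

theorem OIdshift_succ {d x y : ℕ} (α : OIdHom d x y) (m : Fin y) (h) (h') :
    (OIdshift α).δ m.succ h = α.δ m h' := rfl

theorem zero_notMem_up {d x y : ℕ} (i : Fin d) (α : OIdHom d x y) :
    (0 : Fin (y + 1)) ∉ Set.range (OIdup i α).f := by
  rintro ⟨s, hs⟩; exact Fin.succ_ne_zero _ hs

theorem succ_mem_up {d x y : ℕ} (i : Fin d) (α : OIdHom d x y) (m : Fin y) :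
    m.succ ∈ Set.range (OIdup i α).f ↔ m ∈ Set.range α.f := by
  constructor
  · rintro ⟨s, hs⟩; exact ⟨s, Fin.succ_injective _ hs⟩
  · rintro ⟨s, hs⟩; exact ⟨s, congrArg Fin.succ hs⟩

theorem succ_mem_shift {d x y : ℕ} (α : OIdHom d x y) (m : Fin y) :
    m.succ ∈ Set.range (OIdshift α).f ↔ m ∈ Set.range α.f := by
  constructor
  · rintro ⟨s, hs⟩
    induction s using Fin.cases with
    | zero => exact absurd hs.symm (Fin.succ_ne_zero _)
    | succ s => exact ⟨s, Fin.succ_injective _ hs⟩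
  · rintro ⟨s, hs⟩; exact ⟨s.succ, congrArg Fin.succ hs⟩

theorem OIdup_comp {d x y z : ℕ} (i : Fin d) (g : OIdHom d y z) (α : OIdHom d x y) :
    OIdup i (OIdcomp g α) = OIdcomp (OIdshift g) (OIdup i α) := by
  refine OIdHom.ext' (fun r => rfl) fun m h h' => ?_
  induction m using Fin.cases with
  | zero =>
    exact (OIdcomp_δ_in (OIdshift g) (OIdup i α) 0 h' (zero_notMem_up i α)).symm
  | succ m =>
    have h1 : m ∉ Set.range (OIdcomp g α).f := fun hh => h ((succ_mem_up _ _ _).2 hh)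
    rw [OIdup_succ i _ m h h1]
    by_cases hm : m ∈ Set.range g.f
    · obtain ⟨r, rfl⟩ := hm
      have hr : r ∉ Set.range α.f := by rintro ⟨s, rfl⟩; exact h1 ⟨s, rfl⟩
      rw [OIdcomp_δ_in g α r h1 hr]
      exact (OIdcomp_δ_in (OIdshift g) (OIdup i α) r.succ h'
        (fun hh => hr ((succ_mem_up _ _ _).1 hh))).symm
    · rw [OIdcomp_δ_out g α m h1 hm, OIdcomp_δ_out (OIdshift g) _ m.succ h'
        (fun hh => hm ((succ_mem_shift _ _).1 hh))]
      rfl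

theorem OIdshift_comp {d x y z : ℕ} (g : OIdHom d y z) (α : OIdHom d x y) :
    OIdshift (OIdcomp g α) = OIdcomp (OIdshift g) (OIdshift α) := by
  refine OIdHom.ext' (fun r => ?_) fun m h h' => ?_
  · induction r using Fin.cases <;> rfl
  induction m using Fin.cases with
  | zero => exact absurd ⟨0, rfl⟩ h
  | succ m =>
    have h1 : m ∉ Set.range (OIdcomp g α).f := fun hh => h ((succ_mem_shift _ _).2 hh)
    rw [OIdshift_succ _ m h h1]
    by_cases hm : m ∈ Set.range g.f
    · obtain ⟨r, rfl⟩ := hm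
      have hr : r ∉ Set.range α.f := by rintro ⟨s, rfl⟩; exact h1 ⟨s, rfl⟩
      rw [OIdcomp_δ_in g α r h1 hr]
      exact (OIdcomp_δ_in (OIdshift g) (OIdshift α) r.succ h'
        (fun hh => hr ((succ_mem_shift _ _).1 hh))).symm
    · rw [OIdcomp_δ_out g α m h1 hm, OIdcomp_δ_out (OIdshift g) _ m.succ h'
        (fun hh => hm ((succ_mem_shift _ _).1 hh))]
      rfl

/-- The comparison map. -/
noncomputable def OIdTheta (d x y : ℕ) :
    ((Fin d × OIdHom d (x + 1) y) ⊕ OIdHom d x y) → OIdHom d (x + 1) (y + 1) :=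
  Sum.elim (fun p => OIdup p.1 p.2) OIdshift

theorem OIdup_inj {d x y : ℕ} {i j : Fin d} {α β : OIdHom d x y} (h : OIdup i α = OIdup j β) :
    i = j ∧ α = β := by
  constructor
  · exact OIdHom.δ_congr h rfl (zero_notMem_up i α) (zero_notMem_up j β)
  · refine OIdHom.ext' (fun r => Fin.succ_injective _ (congrFun (congrArg OIdHom.f h) r))
      fun m h1 h2 => ?_
    exact OIdHom.δ_congr h (m := m.succ) rfl (fun hh => h1 ((succ_mem_up _ _ _).1 hh))
      (fun hh => h2 ((succ_mem_up _ _ _).1 hh))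

theorem OIdshift_inj {d x y : ℕ} {α β : OIdHom d x y} (h : OIdshift α = OIdshift β) :
    α = β := by
  refine OIdHom.ext' (fun r => Fin.succ_injective _ (congrFun (congrArg OIdHom.f h) r.succ))
    fun m h1 h2 => ?_
  exact OIdHom.δ_congr h (m := m.succ) rfl (fun hh => h1 ((succ_mem_shift _ _).1 hh))
    (fun hh => h2 ((succ_mem_shift _ _).1 hh))

theorem OIdup_ne_shift {d x y : ℕ} (i : Fin d) (α : OIdHom d (x + 1) y) (β : OIdHom d x y) :
    OIdup i α ≠ OIdshift β := fun h =>
  Fin.succ_ne_zero _ (congrFun (congrArg OIdHom.f h) 0)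

theorem OIdTheta_bij (d x y : ℕ) : Function.Bijective (OIdTheta d x y) := by
  constructor
  · rintro (⟨i, α⟩ | α) (⟨j, β⟩ | β) h
    · obtain ⟨rfl, rfl⟩ := OIdup_inj h; rfl
    · exact absurd h (OIdup_ne_shift _ _ _)
    · exact absurd h.symm (OIdup_ne_shift _ _ _)
    · exact congrArg Sum.inr (OIdshift_inj h)
  · intro γ
    by_cases h0 : γ.f 0 = 0
    · have hne : ∀ r : Fin x, γ.f r.succ ≠ 0 := fun r hr =>
        Fin.succ_ne_zero r (γ.mono.injective (hr.trans h0.symm))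
      refine ⟨Sum.inr ⟨fun r => (γ.f r.succ).pred (hne r), fun a b hab =>
        Fin.pred_lt_pred_iff.2 (γ.mono (Fin.succ_lt_succ_iff.2 hab)),
        fun m hm => γ.δ m.succ ?_⟩, ?_⟩
      · rintro ⟨s, hs⟩
        induction s using Fin.cases with
        | zero => exact Fin.succ_ne_zero m (hs.symm.trans h0)
        | succ s => exact hm ⟨s, by simp [hs]⟩
      · refine OIdHom.ext' (fun r => ?_) fun m h h' => ?_
        · induction r using Fin.cases with
          | zero => exact h0.symm
          | succ r => simp [OIdTheta, OIdshift]
        · induction m using Fin.cases with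
          | zero => exact absurd ⟨0, h0⟩ h'
          | succ m => rfl
    · have hne : ∀ r, γ.f r ≠ 0 := fun r hr => by
        have := γ.mono.monotone (Fin.zero_le r)
        rw [hr] at this
        exact h0 (Fin.le_zero_iff.1 this)
      refine ⟨Sum.inl (γ.δ 0 (fun ⟨s, hs⟩ => hne s hs),
        ⟨fun r => (γ.f r).pred (hne r), fun a b hab => Fin.pred_lt_pred_iff.2 (γ.mono hab),
        fun m hm => γ.δ m.succ ?_⟩), ?_⟩
      · rintro ⟨s, hs⟩
        exact hm ⟨s, by simp [hs]⟩
      · refine OIdHom.ext' (fun r => ?_) fun m h h' => ?_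
        · simp [OIdTheta, OIdup]
        · induction m using Fin.cases with
          | zero => rfl
          | succ m => rfl

/-- Let `d ≥ 1` and `x ≥ 1` (the paper's `x` is our `x+1`, so the paper's
`x−1` is our `x`).  There is a family of bijections
`Θ_y : ([d] × OI_d(x,y)) ⊔ OI_d(x−1,y) → OI_d(x,1+y)`, `y ∈ ℕ`, natural with respect to
postcomposition: for every `(g,ε) : y → y′` of `OI_d`,
`Θ_{y′}(i, (g,ε)∘α) = (𝕀⊙(g,ε)) ∘ Θ_y(i, α)` and `Θ_{y′}((g,ε)∘β) = (𝕀⊙(g,ε)) ∘ Θ_y(β)`. -/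
theorem stmt7 (d x : ℕ) (hd : 1 ≤ d) :
    ∃ Θ : ∀ y : ℕ, ((Fin d × OIdHom d (x + 1) y) ⊕ OIdHom d x y) ≃ OIdHom d (x + 1) (y + 1),
      ∀ (y y' : ℕ) (g : OIdHom d y y'),
        (∀ (i : Fin d) (α : OIdHom d (x + 1) y),
          Θ y' (Sum.inl (i, OIdcomp g α)) = OIdcomp (OIdshift g) (Θ y (Sum.inl (i, α)))) ∧
        (∀ β : OIdHom d x y,
          Θ y' (Sum.inr (OIdcomp g β)) = OIdcomp (OIdshift g) (Θ y (Sum.inr β))) := by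
  exact ⟨fun y => Equiv.ofBijective (OIdTheta d x y) (OIdTheta_bij d x y), fun y y' g =>
    ⟨fun i α => OIdup_comp i g α, fun β => OIdshift_comp g β⟩⟩
end

section
/- Let Γ be a finite group, x ≥ 2, y ≥ 1, and let (f,c) be a morphism of FS_Γ from 1+y to x (so f : [1+y] → [x] is surjective and c : [1+y] → Γ). Let m = f(1). (i) If f⁻¹(m) = {1}, then there exist a morphism (f₁,c₁) : x → x of FS_Γ (so f₁ is a bijection of [x]) and a morphism (f₂,c₂) : y → x−1 of FS_Γ such that (f,c) = (f₁,c₁) ∘ (𝕀⊙(f₂,c₂)). (ii) If f⁻¹(m) ≠ {1}, then no factorization as in (i) exists, but there exist a morphism (f₁,c₁) : 1+x → x of FS_Γ and a morphism (f₂,c₂) : y → x of FS_Γ such that (f,c) = (f₁,c₁) ∘ (𝕀⊙(f₂,c₂)). -/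
/-- Morphisms of `FS_Γ` from `[y]` to `[x]`: pairs `(f, c)` with `f : [y] → [x]` a surjection
and `c : [y] → Γ` an arbitrary map.  We model `[n] = {1,…,n}` by `Fin n`, so the element
`1 ∈ [1+y]` corresponds to `0 : Fin (y+1)`. -/
structure FSGHom (Γ : Type) (y x : ℕ) where
  f : Fin y → Fin x
  surj : Function.Surjective f
  c : Fin y → Γ

/-- Composition in `FS_Γ`: the composite of `(f₂,c₂) : z → y` followed by `(f₁,c₁) : y → x`
is `(f₁∘f₂, r ↦ c₁(f₂ r) · c₂ r)`. -/
def FSGcomp {Γ : Type} [Group Γ] {z y x : ℕ} (α₁ : FSGHom Γ y x) (α₂ : FSGHom Γ z y) :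
    FSGHom Γ z x :=
  ⟨α₁.f ∘ α₂.f, α₁.surj.comp α₂.surj, fun r => α₁.c (α₂.f r) * α₂.c r⟩

theorem shiftSurj {y x : ℕ} {f : Fin y → Fin x} (hf : Function.Surjective f) :
    Function.Surjective (Fin.cases 0 (fun r => (f r).succ) : Fin (y + 1) → Fin (x + 1)) := by
  intro m
  induction m using Fin.cases with
  | zero => exact ⟨0, by simp⟩
  | succ t =>
    obtain ⟨r, hr⟩ := hf t
    exact ⟨r.succ, by simp [hr]⟩

/-- The shift `𝕀 ⊙ (f,c)` of a morphism of `FS_Γ`: `(f⁺, c⁺)` where `f⁺(1) = 1`,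
`f⁺(1+r) = 1+f(r)`, `c⁺(1) = 1` and `c⁺(1+r) = c(r)`. -/
def FSGshift {Γ : Type} [Group Γ] {y x : ℕ} (α : FSGHom Γ y x) : FSGHom Γ (y + 1) (x + 1) :=
  ⟨Fin.cases 0 (fun r => (α.f r).succ), shiftSurj α.surj, Fin.cons 1 α.c⟩

theorem FSGHom_ext_aux {Γ : Type} {y x : ℕ} {a b : FSGHom Γ y x}
    (hf : ∀ r, a.f r = b.f r) (hc : ∀ r, a.c r = b.c r) : a = b := by
  cases a; cases b
  simp only [FSGHom.mk.injEq]
  exact ⟨funext hf, funext hc⟩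

/-- Let `Γ` be a finite group, `x ≥ 2` (the paper's `x` is our `x+2`),
`y ≥ 1` (the paper's `y` is our `y+1`), and `(f,c) : 1+y → x` a morphism of `FS_Γ`.
Let `m = f(1)`.
(i) If `f⁻¹(m) = {1}`, there are `(f₁,c₁) : x → x` of `FS_Γ` (automatically a bijection) and
`(f₂,c₂) : y → x−1` with `(f,c) = (f₁,c₁) ∘ (𝕀⊙(f₂,c₂))`.
(ii) If `f⁻¹(m) ≠ {1}`, no factorization as in (i) exists, but there are
`(f₁,c₁) : 1+x → x` and `(f₂,c₂) : y → x` with `(f,c) = (f₁,c₁) ∘ (𝕀⊙(f₂,c₂))`. -/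
theorem stmt8 {Γ : Type} [Group Γ] [Finite Γ] (x y : ℕ)
    (α : FSGHom Γ (y + 1 + 1) (x + 2)) :
    (α.f ⁻¹' {α.f 0} = {0} →
      ∃ (α₁ : FSGHom Γ (x + 2) (x + 2)) (α₂ : FSGHom Γ (y + 1) (x + 1)),
        α = FSGcomp α₁ (FSGshift α₂)) ∧
    (α.f ⁻¹' {α.f 0} ≠ {0} →
      (¬ ∃ (α₁ : FSGHom Γ (x + 2) (x + 2)) (α₂ : FSGHom Γ (y + 1) (x + 1)),
        α = FSGcomp α₁ (FSGshift α₂)) ∧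
      (∃ (α₁ : FSGHom Γ (x + 2 + 1) (x + 2)) (α₂ : FSGHom Γ (y + 1) (x + 2)),
        α = FSGcomp α₁ (FSGshift α₂))) := by
  constructor
  · intro h
    have hne : ∀ r : Fin (y + 1), α.f r.succ ≠ α.f 0 := by
      intro r hr
      have h1 : r.succ ∈ α.f ⁻¹' {α.f 0} := hr
      rw [h] at h1
      exact Fin.succ_ne_zero r h1
    have hex : ∀ r : Fin (y + 1), ∃ t : Fin (x + 1), (α.f 0).succAbove t = α.f r.succ :=
      fun r => Fin.exists_succAbove_eq (hne r)
    choose g hg using hex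
    have hgs : Function.Surjective g := by
      intro t
      obtain ⟨r, hr⟩ := α.surj ((α.f 0).succAbove t)
      induction r using Fin.cases with
      | zero => exact absurd hr.symm (Fin.succAbove_ne _ _)
      | succ r => exact ⟨r, Fin.succAbove_right_injective ((hg r).trans hr)⟩
    refine ⟨⟨Fin.cases (α.f 0) (α.f 0).succAbove, ?_, Fin.cases (α.c 0) (fun _ => 1)⟩,
      ⟨g, hgs, fun r => α.c r.succ⟩, ?_⟩
    · intro t
      by_cases ht : t = α.f 0
      · exact ⟨0, ht.symm⟩
      · obtain ⟨s, hs⟩ := Fin.exists_succAbove_eq ht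
        exact ⟨s.succ, hs⟩
    · apply FSGHom_ext_aux
      · intro r
        induction r using Fin.cases with
        | zero => rfl
        | succ r => exact (hg r).symm
      · intro r
        induction r using Fin.cases with
        | zero => exact (mul_one _).symm
        | succ r => exact (one_mul _).symm
  · intro h
    have hex : ∃ r : Fin (y + 1), α.f r.succ = α.f 0 := by
      by_contra hcon
      apply h
      ext r
      induction r using Fin.cases with
      | zero => simp
      | succ r =>
        simp only [Set.mem_preimage, Set.mem_singleton_iff, Fin.succ_ne_zero, iff_false]
        exact fun hr => hcon ⟨r, hr⟩
    obtain ⟨r0, hr0⟩ := hex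
    constructor
    · rintro ⟨α₁, α₂, rfl⟩
      have hinj : Function.Injective α₁.f := Finite.injective_iff_surjective.mpr α₁.surj
      have h1 : (α₂.f r0).succ = 0 := hinj hr0
      exact Fin.succ_ne_zero _ h1
    · refine ⟨⟨Fin.cases (α.f 0) id, fun t => ⟨t.succ, rfl⟩, Fin.cases (α.c 0) (fun _ => 1)⟩,
        ⟨fun r => α.f r.succ, ?_, fun r => α.c r.succ⟩, ?_⟩
      · intro t
        obtain ⟨r, hr⟩ := α.surj t
        induction r using Fin.cases with
        | zero => exact ⟨r0, hr0.trans hr⟩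
        | succ r => exact ⟨r, hr⟩
      · apply FSGHom_ext_aux
        · intro r
          induction r using Fin.cases with
          | zero => rfl
          | succ r => rfl
        · intro r
          induction r using Fin.cases with
          | zero => exact (mul_one _).symm
          | succ r => exact (one_mul _).symm
end

section
/- Let Γ be a finite group, x ≥ 2, y ≥ 1, and let (f,c) be a morphism of FS_Γ from 1+y to x. Set z = x−1 if f⁻¹(f(1)) = {1}, and z = x otherwise. Suppose (f,c) = (f₁,c₁) ∘ (𝕀⊙(f₂,c₂)) = (f₁′,c₁′) ∘ (𝕀⊙(f₂′,c₂′)) where (f₁,c₁), (f₁′,c₁′) : 1+z → x and (f₂,c₂), (f₂′,c₂′) : y → z are morphisms of FS_Γ. Then: (a) if (f₁,c₁) = (f₁′,c₁′) then (f₂,c₂) = (f₂′,c₂′); (b) in general there exists a morphism (σ,d) : z → z of FS_Γ (so σ is a bijection of [z]) such that (f₁′,c₁′) = (f₁,c₁) ∘ (𝕀⊙(σ,d)) and (f₂,c₂) = (σ,d) ∘ (f₂′,c₂′). -/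
theorem FSG_inj_aux {Γ : Type} [Group Γ] (x y z : ℕ)
    (α : FSGHom Γ (y + 1 + 1) (x + 2))
    (hz : (α.f ⁻¹' {α.f 0} = {0} → z = x + 1) ∧ (α.f ⁻¹' {α.f 0} ≠ {0} → z = x + 2))
    (α₁ : FSGHom Γ (z + 1) (x + 2)) (α₂ : FSGHom Γ (y + 1) z)
    (h : α = FSGcomp α₁ (FSGshift α₂)) :
    Function.Injective (fun t : Fin z => α₁.f t.succ) := by
  have hs : ∀ r, α.f (Fin.succ r) = α₁.f (α₂.f r).succ := by
    intro r; rw [h]; rfl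
  by_cases hc : α.f ⁻¹' {α.f 0} = {0}
  · obtain rfl := hz.1 hc
    have := Finite.injective_iff_surjective.2 α₁.surj
    exact this.comp (Fin.succ_injective _)
  · obtain rfl := hz.2 hc
    apply Finite.injective_iff_surjective.2
    have key : ∃ r : Fin (y + 1), α.f r.succ = α.f 0 := by
      by_contra hn
      push Not at hn
      apply hc
      ext m
      induction m using Fin.cases with
      | zero => simp
      | succ r => simpa using hn r
    intro b
    obtain ⟨m, rfl⟩ := α.surj b
    induction m using Fin.cases with
    | zero =>
      obtain ⟨r, hr⟩ := key
      exact ⟨α₂.f r, by rw [← hr, hs]⟩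
    | succ r => exact ⟨α₂.f r, (hs r).symm⟩

theorem FSG_ext_aux {Γ : Type} {y x : ℕ} {a b : FSGHom Γ y x} (h : ∀ r, a.f r = b.f r)
    (h' : ∀ r, a.c r = b.c r) : a = b := by
  cases a; cases b
  obtain rfl := funext h
  obtain rfl := funext h'
  rfl

/-- Let `Γ` be a finite group, `x ≥ 2` (the paper's `x` is our `x+2`),
`y ≥ 1` (the paper's `y` is our `y+1`), and `(f,c) : 1+y → x` a morphism of `FS_Γ`.
Set `z = x−1` if `f⁻¹(f(1)) = {1}` and `z = x` otherwise.  Given two factorizations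
`(f,c) = (f₁,c₁) ∘ (𝕀⊙(f₂,c₂)) = (f₁′,c₁′) ∘ (𝕀⊙(f₂′,c₂′))` through `z`:
(a) if `(f₁,c₁) = (f₁′,c₁′)` then `(f₂,c₂) = (f₂′,c₂′)`;
(b) there is a morphism `(σ,d) : z → z` of `FS_Γ` (automatically a bijection of `[z]`) with
`(f₁′,c₁′) = (f₁,c₁) ∘ (𝕀⊙(σ,d))` and `(f₂,c₂) = (σ,d) ∘ (f₂′,c₂′)`. -/
theorem stmt9 {Γ : Type} [Group Γ] [Finite Γ] (x y z : ℕ)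
    (α : FSGHom Γ (y + 1 + 1) (x + 2))
    (hz : (α.f ⁻¹' {α.f 0} = {0} → z = x + 1) ∧ (α.f ⁻¹' {α.f 0} ≠ {0} → z = x + 2))
    (α₁ α₁' : FSGHom Γ (z + 1) (x + 2)) (α₂ α₂' : FSGHom Γ (y + 1) z)
    (h : α = FSGcomp α₁ (FSGshift α₂)) (h' : α = FSGcomp α₁' (FSGshift α₂')) :
    (α₁ = α₁' → α₂ = α₂') ∧
    (∃ σ : FSGHom Γ z z,
      α₁' = FSGcomp α₁ (FSGshift σ) ∧ α₂ = FSGcomp σ α₂') := by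
  have g := FSG_inj_aux x y z α hz α₁ α₂ h
  have g' := FSG_inj_aux x y z α hz α₁' α₂' h'
  have hf : ∀ r, α.f (Fin.succ r) = α₁.f (α₂.f r).succ := by
    intro r; rw [h]; rfl
  have hf' : ∀ r, α.f (Fin.succ r) = α₁'.f (α₂'.f r).succ := by
    intro r; rw [h']; rfl
  have hcc : ∀ r, α.c (Fin.succ r) = α₁.c (α₂.f r).succ * α₂.c r := by
    intro r; rw [h]; rfl
  have hcc' : ∀ r, α.c (Fin.succ r) = α₁'.c (α₂'.f r).succ * α₂'.c r := by
    intro r; rw [h']; rfl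
  have h0 : α.f 0 = α₁.f 0 := by rw [h]; rfl
  have h0' : α.f 0 = α₁'.f 0 := by rw [h']; rfl
  have k0 : α.c 0 = α₁.c 0 * 1 := by rw [h]; rfl
  have k0' : α.c 0 = α₁'.c 0 * 1 := by rw [h']; rfl
  clear h h'
  constructor
  · rintro rfl
    have e : ∀ r, α₂.f r = α₂'.f r := fun r => g ((hf r).symm.trans (hf' r))
    refine FSG_ext_aux e fun r => ?_
    have := (hcc r).symm.trans (hcc' r)
    rw [e r] at this
    exact mul_left_cancel this
  · have ex : ∀ t, ∃ s, α₁.f (Fin.succ s) = α₁'.f (Fin.succ t) := by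
      intro t
      obtain ⟨r, rfl⟩ := α₂'.surj t
      exact ⟨α₂.f r, (hf r).symm.trans (hf' r)⟩
    choose s hs using ex
    have sinj : Function.Injective s := by
      intro a b hab
      apply g'
      show α₁'.f a.succ = α₁'.f b.succ
      rw [← hs, ← hs, hab]
    have e : ∀ r, α₂.f r = s (α₂'.f r) := by
      intro r
      apply g
      show α₁.f _ = α₁.f _
      rw [hs, ← hf, hf']
    refine ⟨⟨s, Finite.injective_iff_surjective.1 sinj,
      fun t => (α₁.c (s t).succ)⁻¹ * α₁'.c t.succ⟩, ?_, ?_⟩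
    · refine FSG_ext_aux (fun m => ?_) (fun m => ?_)
      · induction m using Fin.cases with
        | zero => exact h0'.symm.trans h0
        | succ t => exact (hs t).symm
      · induction m using Fin.cases with
        | zero =>
          show α₁'.c 0 = α₁.c 0 * 1
          rw [← k0, k0', mul_one]
        | succ t =>
          show α₁'.c t.succ = α₁.c (s t).succ * ((α₁.c (s t).succ)⁻¹ * α₁'.c t.succ)
          rw [mul_inv_cancel_left]
    · refine FSG_ext_aux e (fun r => ?_)
      show α₂.c r = (α₁.c (s (α₂'.f r)).succ)⁻¹ * α₁'.c (α₂'.f r).succ * α₂'.c r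
      rw [mul_assoc, ← hcc', hcc, e, inv_mul_cancel_left]
end

section
/- Let Γ be a finite group, x ≥ 2, y ≥ 1, and let (f,c) be a morphism of OS_Γ from 1+y to x (so f : [1+y] → [x] is an ordered surjection and c : [1+y] → Γ); note that f(1) = 1. Set z = x−1 if f⁻¹(1) = {1}, and z = x otherwise. Then there exist morphisms (f₁,c₁) : 1+z → x and (f₂,c₂) : y → z of OS_Γ with (f,c) = (f₁,c₁) ∘ (𝕀⊙(f₂,c₂)). Moreover, if f⁻¹(1) ≠ {1} there is no such factorization with z replaced by x−1, and the ordered surjections f₁ and f₂ occurring in any such factorization (for the given z) are uniquely determined by f. -/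
/-- The fiber `f⁻¹(r)` of a surjection in `FS_Γ`, as a finset. -/
def FSGHom.fiber {Γ : Type} {y x : ℕ} (A : FSGHom Γ y x) (r : Fin x) : Finset (Fin y) :=
  Finset.univ.filter (fun i => A.f i = r)

theorem FSGHom.fiber_nonempty {Γ : Type} {y x : ℕ} (A : FSGHom Γ y x) (r : Fin x) :
    (A.fiber r).Nonempty := by
  obtain ⟨i, hi⟩ := A.surj r
  exact ⟨i, by simp [FSGHom.fiber, hi]⟩

/-- A morphism `(f,c)` of `FS_Γ` lies in `OS_Γ` when `f` is an *ordered surjection*: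
for all `r < s` in `[x]`, `min f⁻¹(r) < min f⁻¹(s)`. -/
def FSGHom.IsOrdered {Γ : Type} {y x : ℕ} (A : FSGHom Γ y x) : Prop :=
  ∀ r s : Fin x, r < s →
    (A.fiber r).min' (A.fiber_nonempty r) < (A.fiber s).min' (A.fiber_nonempty s)

/-- Elementary form of being an ordered surjection. -/
def OrdF {m n : ℕ} (f : Fin m → Fin n) : Prop :=
  ∀ r s : Fin n, r < s → ∀ j, f j = s → ∃ i, i < j ∧ f i = r

theorem isOrdered_iff_ordF {Γ : Type} {y x : ℕ} (A : FSGHom Γ y x) :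
    A.IsOrdered ↔ OrdF A.f := by
  constructor
  · intro h r s hrs j hj
    have h1 := Finset.min'_mem (A.fiber r) (A.fiber_nonempty r)
    have h2 := Finset.min'_le (A.fiber s) j (by simp [FSGHom.fiber, hj])
    refine ⟨_, lt_of_lt_of_le (h r s hrs) h2, ?_⟩
    simpa [FSGHom.fiber] using h1
  · intro h r s hrs
    have h1 := Finset.min'_mem (A.fiber s) (A.fiber_nonempty s)
    obtain ⟨i, hi, hr⟩ := h r s hrs ((A.fiber s).min' (A.fiber_nonempty s))
      (by simpa [FSGHom.fiber] using h1)
    exact lt_of_le_of_lt (Finset.min'_le (A.fiber r) i (by simp [FSGHom.fiber, hr])) hi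

theorem descent_aux {m : ℕ} {P Q : Fin m → Prop} (h1 : ∀ j, P j → ∃ i, i < j ∧ Q i)
    (h2 : ∀ j, Q j → ∃ i, i < j ∧ P i) : ∀ j, ¬ P j := by
  intro j
  induction j using WellFoundedLT.induction with
  | ind j ih =>
    intro hj
    obtain ⟨i, hi, hQ⟩ := h1 j hj
    obtain ⟨k, hk, hP⟩ := h2 i hQ
    exact ih k (hk.trans hi) hP

theorem strictMono_eq_id {n : ℕ} {q : Fin n → Fin n} (hq : StrictMono q) : q = id := by
  have e := Subsingleton.elim
    (StrictMono.orderIsoOfSurjective q hq (Finite.surjective_of_injective hq.injective))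
    (OrderIso.refl (Fin n))
  funext t
  exact congrArg (fun u : Fin n ≃o Fin n => u t) e

theorem ordF_unique {m n : ℕ} {h : Fin m → Fin n} {q : Fin n → Fin n}
    (hs : Function.Surjective h) (ho : OrdF h) (hq : Function.Injective q)
    (ho2 : OrdF (q ∘ h)) : q = id := by
  apply strictMono_eq_id
  intro r s hrs
  by_contra hcon
  have hlt : q s < q r := lt_of_le_of_ne (not_lt.mp hcon) (fun e => hrs.ne' (hq e))
  obtain ⟨j, hj⟩ := hs r
  refine descent_aux (P := fun j => h j = r) (Q := fun j => h j = s) ?_ ?_ j hj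
  · intro j hj
    obtain ⟨i, hi, e⟩ := ho2 _ _ hlt j (by simp [hj])
    exact ⟨i, hi, hq e⟩
  · intro j hj
    exact ho _ _ hrs j hj

theorem exists_sort {m n : ℕ} (g : Fin m → Fin n) (hg : Function.Surjective g) :
    ∃ (p : Equiv.Perm (Fin n)) (h : Fin m → Fin n),
      Function.Surjective h ∧ OrdF h ∧ ∀ j, p (h j) = g j := by
  classical
  have hne : ∀ r, (Finset.univ.filter (fun i => g i = r)).Nonempty := fun r => by
    obtain ⟨i, hi⟩ := hg r
    exact ⟨i, by simp [hi]⟩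
  let M : Fin n → Fin m := fun r => (Finset.univ.filter (fun i => g i = r)).min' (hne r)
  have hM : ∀ r, g (M r) = r := fun r => by
    have := Finset.min'_mem _ (hne r)
    simpa using this
  have hM2 : ∀ j, M (g j) ≤ j := fun j => Finset.min'_le _ _ (by simp)
  have hinj : Function.Injective M := fun a b e => by rw [← hM a, ← hM b, e]
  let p := Tuple.sort M
  have hmono : StrictMono (M ∘ p) :=
    (Tuple.monotone_sort M).strictMono_of_injective (hinj.comp p.injective)
  refine ⟨p, fun j => p.symm (g j), p.symm.surjective.comp hg, ?_, fun j => by simp⟩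
  intro r s hrs j hj
  have hj2 : g j = p s := by rw [← hj]; simp
  refine ⟨M (p r), lt_of_lt_of_le (hmono hrs) ?_, ?_⟩
  · have := hM2 j
    rw [hj2] at this
    exact this
  · simp [hM]

theorem FSGHom.ext_aux {Γ : Type} {y x : ℕ} {A B : FSGHom Γ y x} (h1 : A.f = B.f)
    (h2 : A.c = B.c) : A = B := by
  cases A; cases B; simp_all

theorem comp_eq_iff {Γ : Type} [Group Γ] {y z x : ℕ} (α : FSGHom Γ (y + 1) x)
    (α₁ : FSGHom Γ (z + 1) x) (α₂ : FSGHom Γ y z) :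
    α = FSGcomp α₁ (FSGshift α₂) ↔
      (α.f 0 = α₁.f 0 ∧ ∀ r, α.f r.succ = α₁.f (α₂.f r).succ) ∧
      (α.c 0 = α₁.c 0 ∧ ∀ r, α.c r.succ = α₁.c (α₂.f r).succ * α₂.c r) := by
  constructor
  · rintro rfl
    simp [FSGcomp, FSGshift]
  · rintro ⟨⟨h1, h2⟩, h3, h4⟩
    apply FSGHom.ext_aux
    · funext i
      cases i using Fin.cases <;> simp [FSGcomp, FSGshift, h1, h2]
    · funext i
      cases i using Fin.cases <;> simp [FSGcomp, FSGshift, h3, h4]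

/-- Let `Γ` be a finite group, `x ≥ 2` (the paper's `x` is our `x+2`),
`y ≥ 1` (the paper's `y` is our `y+1`), and `(f,c) : 1+y → x` a morphism of `OS_Γ`
(an `FS_Γ`-morphism whose surjection is ordered); note that `f(1) = 1`.  Set `z = x−1` if
`f⁻¹(1) = {1}` and `z = x` otherwise.  Then there is a factorization
`(f,c) = (f₁,c₁) ∘ (𝕀⊙(f₂,c₂))` with `(f₁,c₁) : 1+z → x` and `(f₂,c₂) : y → z` in `OS_Γ`;
if `f⁻¹(1) ≠ {1}` there is no such factorization through `x−1`; and the ordered surjections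
`f₁`, `f₂` in any such factorization are uniquely determined by `f`. -/
theorem stmt11 {Γ : Type} [Group Γ] [Finite Γ] (x y z : ℕ)
    (α : FSGHom Γ (y + 1 + 1) (x + 2)) (hα : α.IsOrdered)
    (hz : (α.f ⁻¹' {0} = {0} → z = x + 1) ∧ (α.f ⁻¹' {0} ≠ {0} → z = x + 2)) :
    α.f 0 = 0 ∧
    (∃ (α₁ : FSGHom Γ (z + 1) (x + 2)) (α₂ : FSGHom Γ (y + 1) z),
      α₁.IsOrdered ∧ α₂.IsOrdered ∧ α = FSGcomp α₁ (FSGshift α₂)) ∧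
    (α.f ⁻¹' {0} ≠ {0} →
      ¬ ∃ (α₁ : FSGHom Γ (x + 2) (x + 2)) (α₂ : FSGHom Γ (y + 1) (x + 1)),
        α₁.IsOrdered ∧ α₂.IsOrdered ∧ α = FSGcomp α₁ (FSGshift α₂)) ∧
    (∀ (α₁ α₁' : FSGHom Γ (z + 1) (x + 2)) (α₂ α₂' : FSGHom Γ (y + 1) z),
      α₁.IsOrdered → α₂.IsOrdered → α₁'.IsOrdered → α₂'.IsOrdered →
      α = FSGcomp α₁ (FSGshift α₂) → α = FSGcomp α₁' (FSGshift α₂') →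
        α₁.f = α₁'.f ∧ α₂.f = α₂'.f) := by
  have hO := (isOrdered_iff_ordF α).1 hα
  have h0 : α.f 0 = 0 := by
    by_contra hne
    obtain ⟨i, hi, -⟩ := hO 0 (α.f 0) (Fin.pos_iff_ne_zero.2 hne) 0 rfl
    exact absurd hi (Fin.not_lt_zero i)
  have hfib : α.f ⁻¹' {0} ≠ {0} ↔ ∃ r : Fin (y + 1), α.f r.succ = 0 := by
    constructor
    · intro hne
      by_contra hcon
      push Not at hcon
      apply hne
      ext i
      cases i using Fin.cases with
      | zero => simp [h0]
      | succ r => simp [hcon r]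
    · rintro ⟨r, hr⟩ e
      have : r.succ ∈ α.f ⁻¹' {0} := hr
      rw [e] at this
      exact Fin.succ_ne_zero r this
  refine ⟨h0, ?_, ?_, ?_⟩
  · by_cases hc : α.f ⁻¹' {0} = {0}
    · obtain rfl := hz.1 hc
      have hnz : ∀ r : Fin (y + 1), α.f r.succ ≠ 0 := by
        intro r hr
        exact hfib.2 ⟨r, hr⟩ hc
      refine ⟨⟨id, Function.surjective_id, Fin.cons (α.c 0) (fun _ => 1)⟩,
        ⟨fun r => (α.f r.succ).pred (hnz r), ?_, fun r => α.c r.succ⟩, ?_, ?_, ?_⟩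
      · intro t
        obtain ⟨i, hi⟩ := α.surj t.succ
        cases i using Fin.cases with
        | zero => rw [h0] at hi; exact absurd hi.symm (Fin.succ_ne_zero t)
        | succ r => exact ⟨r, by simp [hi]⟩
      · rw [isOrdered_iff_ordF]
        rintro r s hrs j rfl
        exact ⟨r, hrs, rfl⟩
      · rw [isOrdered_iff_ordF]
        intro r s hrs j hj
        have hj2 : α.f j.succ = s.succ := by rw [← hj]; simp
        obtain ⟨i, hi, hr⟩ := hO r.succ s.succ (Fin.succ_lt_succ_iff.2 hrs) _ hj2
        cases i using Fin.cases with
        | zero => rw [h0] at hr; exact absurd hr.symm (Fin.succ_ne_zero r)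
        | succ i => exact ⟨i, Fin.succ_lt_succ_iff.1 hi, by simp [hr]⟩
      · rw [comp_eq_iff]
        refine ⟨⟨h0, fun r => by simp⟩, rfl, fun r => ?_⟩
        simp only [Fin.cons_succ, one_mul]
    · obtain rfl := hz.2 hc
      have hgs : Function.Surjective (fun r : Fin (y + 1) => α.f r.succ) := by
        intro t
        obtain ⟨i, hi⟩ := α.surj t
        cases i using Fin.cases with
        | zero =>
          obtain ⟨r, hr⟩ := hfib.1 hc
          exact ⟨r, by simp only [hr, ← hi, h0]⟩
        | succ r => exact ⟨r, hi⟩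
      obtain ⟨p, h, hs, ho, hp⟩ := exists_sort _ hgs
      refine ⟨⟨Fin.cons 0 p, ?_, Fin.cons (α.c 0) (fun _ => 1)⟩,
        ⟨h, hs, fun r => α.c r.succ⟩, ?_, ?_, ?_⟩
      · intro t
        exact ⟨(p.symm t).succ, by simp⟩
      · rw [isOrdered_iff_ordF]
        intro r s hrs j hj
        cases j using Fin.cases with
        | zero =>
          simp only [Fin.cons_zero] at hj
          rw [← hj] at hrs
          exact absurd hrs (Fin.not_lt_zero r)
        | succ t =>
          simp only [Fin.cons_succ] at hj
          by_cases hr0 : r = 0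
          · exact ⟨0, Fin.succ_pos t, by simp [hr0]⟩
          · refine ⟨(p.symm r).succ, ?_, by simp⟩
            rw [Fin.succ_lt_succ_iff]
            by_contra hcon
            have hlt : t < p.symm r := lt_of_le_of_ne (not_lt.mp hcon) (fun e => by
              rw [e, Equiv.apply_symm_apply] at hj
              exact hrs.ne hj)
            obtain ⟨j, hj'⟩ := hgs r
            refine descent_aux (P := fun j : Fin (y + 1) => α.f j.succ = r)
              (Q := fun j : Fin (y + 1) => α.f j.succ = s) ?_ ?_ j hj'
            · intro j hjr
              obtain ⟨i, hi, e⟩ := ho _ _ hlt j (by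
                rw [Equiv.eq_symm_apply, hp]; exact hjr)
              refine ⟨i, hi, ?_⟩
              rw [← hj, ← e, hp]
            · intro j hjs
              obtain ⟨i, hi, e⟩ := hO _ _ hrs _ hjs
              cases i using Fin.cases with
              | zero => exact absurd (e.symm.trans h0) hr0
              | succ i => exact ⟨i, Fin.succ_lt_succ_iff.1 hi, e⟩
      · rw [isOrdered_iff_ordF]
        exact ho
      · rw [comp_eq_iff]
        simp [h0, hp]
  · rintro hc ⟨α₁, α₂, -, -, e⟩
    rw [comp_eq_iff] at e
    obtain ⟨⟨e1, e2⟩, -⟩ := e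
    obtain ⟨r, hr⟩ := hfib.1 hc
    have hinj := Finite.injective_iff_surjective.2 α₁.surj
    refine Fin.succ_ne_zero (α₂.f r) (hinj ?_)
    exact (e2 r).symm.trans (hr.trans (h0.symm.trans e1))
  · intro α₁ α₁' α₂ α₂' o1 o2 o1' o2' e e'
    rw [isOrdered_iff_ordF] at o1 o2 o1' o2'
    rw [comp_eq_iff] at e e'
    obtain ⟨⟨e1, e2⟩, -⟩ := e
    obtain ⟨⟨e1', e2'⟩, -⟩ := e'
    by_cases hc : α.f ⁻¹' {0} = {0}
    · obtain rfl := hz.1 hc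
      have key : ∀ β : FSGHom Γ (x + 1 + 1) (x + 2), OrdF β.f → β.f = id := by
        intro β hβ
        refine ordF_unique (h := id) Function.surjective_id ?_
          (Finite.injective_iff_surjective.2 β.surj) hβ
        rintro r s hrs j rfl
        exact ⟨r, hrs, rfl⟩
      have k1 := key α₁ o1
      have k2 := key α₁' o1'
      refine ⟨k1.trans k2.symm, ?_⟩
      funext r
      have := (e2 r).symm.trans (e2' r)
      rw [k1, k2] at this
      exact Fin.succ_injective _ this
    · obtain rfl := hz.2 hc
      have key : ∀ (β : FSGHom Γ (x + 2 + 1) (x + 2)) (γ : FSGHom Γ (y + 1) (x + 2)),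
          (∀ r, α.f r.succ = β.f (γ.f r).succ) →
          Function.Bijective (fun t : Fin (x + 2) => β.f t.succ) := by
        intro β γ hβ
        have hsurj : Function.Surjective (fun t : Fin (x + 2) => β.f t.succ) := by
          intro t
          obtain ⟨i, hi⟩ := α.surj t
          cases i using Fin.cases with
          | zero =>
            obtain ⟨r, hr⟩ := hfib.1 hc
            exact ⟨γ.f r, by simp only [← hβ, hr, ← hi, h0]⟩
          | succ r => exact ⟨γ.f r, by simp only [← hβ, hi]⟩
        exact ⟨Finite.injective_iff_surjective.2 hsurj, hsurj⟩
      let p := Equiv.ofBijective _ (key α₁ α₂ e2)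
      let p' := Equiv.ofBijective _ (key α₁' α₂' e2')
      have hp : ∀ t, p t = α₁.f t.succ := fun t => rfl
      have hp' : ∀ t, p' t = α₁'.f t.succ := fun t => rfl
      have hq : ∀ r, p.symm (p' (α₂'.f r)) = α₂.f r := by
        intro r
        rw [Equiv.symm_apply_eq, hp, hp', ← e2, ← e2']
      have hid := ordF_unique (q := fun t => p.symm (p' t)) α₂'.surj o2'
        (p.symm.injective.comp p'.injective) (by
          have : (fun t => p.symm (p' t)) ∘ α₂'.f = α₂.f := funext hq
          rw [this]; exact o2)
      have hpp : ∀ t, p' t = p t := by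
        intro t
        have := congrFun hid t
        simpa [Equiv.symm_apply_eq] using this
      constructor
      · funext i
        cases i using Fin.cases with
        | zero => rw [← e1, ← e1']
        | succ t => rw [← hp, ← hp', hpp]
      · funext r
        rw [← hq r]
        exact congrFun hid _
end
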